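/- For μ-almost every x ∈ T², the sequence (U_n(x))_{n≥1} of Chacon-type maps is eventually constant, and its μ-a.e. pointwise limit U is an automorphism of T²: U is measurable, bijective up to μ-null sets with measurable inverse, and μ(U⁻¹(A)) = μ(A) for every Borel set A. -/

import Mathlib

/-!
The maps `U_{n-1}` and `U_n` differ only on the block `B_n = [1-4s,1) × [0,2s)`, `s = 2⁻ⁿ`. These
blocks decrease to the empty set, so `U_n(x)` is eventually constant for every `x`, not merely
almost every one; `chaconLim` is the limit.

Both `U_{n-1}` and `U_n` map `B_n` bijectively onto
`C_n = [0,2s) × [1-2s,1) ∪ [1-2s,1) × [0,2s)` (`chaconU_bijOn_next`, `chaconU_bijOn`), hence by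
induction every `U_n` is a bijection. The `C_n` also shrink to the empty set, which makes the limit
a bijection of the whole torus (`chaconLim_bijective`). It is measurable as a pointwise limit, and
its inverse is measurable because the torus is standard Borel.

The limit moves each point by a vector with rational coordinates. A measurable bijection with
countably many displacements is a rearrangement of countably many translated pieces, so it
preserves Haar measure (`measure_preimage_of_countable_displacement`).
-/

open MeasureTheory Filter Set

noncomputable section

instance fact01 : Fact ((0:ℝ) < 1) := ⟨one_pos⟩

/-- The two-dimensional torus `[0,1)²` with coordinatewise addition mod 1. -/
abbrev T2 : Type := AddCircle (1:ℝ) × AddCircle (1:ℝ)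

/-- The canonical representative in `[0,1)` of a point of the circle. -/
noncomputable def rep (x : AddCircle (1:ℝ)) : ℝ := ((AddCircle.equivIco 1 0) x : ℝ)

/-- The point of the torus with coordinates `a`, `b` (mod 1). -/
noncomputable def tv (a b : ℝ) : T2 := ((a : AddCircle (1:ℝ)), (b : AddCircle (1:ℝ)))

open Classical in
/-- The Chacon-type maps `U_n` on the torus. -/
noncomputable def chaconU : ℕ → T2 → T2
  | 0 => id
  | 1 => fun x =>
      if 0 ≤ rep x.1 ∧ rep x.1 < 1/2 ∧ 1/2 ≤ rep x.2 ∧ rep x.2 < 1 then x + tv (1/2) 0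
      else if 1/2 ≤ rep x.1 ∧ rep x.1 < 1 ∧ 1/2 ≤ rep x.2 ∧ rep x.2 < 1 then
        x + tv (-(1/2)) (-(1/2))
      else if 0 ≤ rep x.1 ∧ rep x.1 < 1/2 ∧ 0 ≤ rep x.2 ∧ rep x.2 < 1/2 then x + tv 0 (1/2)
      else x
  | (n+2) => fun x =>
      let s : ℝ := 1 / 2 ^ (n+2)
      let a := rep x.1
      let b := rep x.2
      if 1-4*s ≤ a ∧ a < 1-3*s ∧ s ≤ b ∧ b < 2*s then x + tv (5*s-1) (1-2*s)
      else if 1-3*s ≤ a ∧ a < 1-2*s ∧ s ≤ b ∧ b < 2*s then x + tv s 0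
      else if 1-4*s ≤ a ∧ a < 1-3*s ∧ 0 ≤ b ∧ b < s then x + tv (3*s) s
      else if 1-3*s ≤ a ∧ a < 1-2*s ∧ 0 ≤ b ∧ b < s then x + tv s 0
      else if 1-2*s ≤ a ∧ a < 1 ∧ s ≤ b ∧ b < 2*s then x + tv (2*s-1) (1-3*s)
      else if 1-2*s ≤ a ∧ a < 1-s ∧ 0 ≤ b ∧ b < s then x + tv (2*s-1) (1-s)
      else if 1-s ≤ a ∧ a < 1 ∧ 0 ≤ b ∧ b < s then x
      else chaconU (n+1) x

/-- An automorphism of the torus: measurable, bijective up to null sets with measurable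
inverse, and measure-preserving. -/
def IsAutomorphism (U : T2 → T2) : Prop :=
  Measurable U ∧ ∃ V : T2 → T2, Measurable V ∧
    (∀ᵐ x ∂(volume : Measure T2), V (U x) = x) ∧
    (∀ᵐ x ∂(volume : Measure T2), U (V x) = x) ∧
    ∀ A : Set T2, MeasurableSet A → volume (U ⁻¹' A) = volume A


/-! ### Coordinates on the torus -/

lemma rep_nonneg (x : AddCircle (1:ℝ)) : 0 ≤ rep x := ((AddCircle.equivIco 1 0) x).2.1

lemma rep_lt_one (x : AddCircle (1:ℝ)) : rep x < 1 := by
  have h := ((AddCircle.equivIco (1:ℝ) 0) x).2.2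
  simpa [rep] using h

lemma coe_rep (x : AddCircle (1:ℝ)) : ((rep x : ℝ) : AddCircle (1:ℝ)) = x :=
  AddCircle.coe_equivIco

lemma rep_coe {r : ℝ} (h0 : 0 ≤ r) (h1 : r < 1) : rep (r : AddCircle (1:ℝ)) = r := by
  have h : r ∈ Ico (0:ℝ) (0 + 1) := ⟨h0, by linarith⟩
  exact AddCircle.equivIco_coe_of_mem h

lemma rep_add {x : AddCircle (1:ℝ)} {c : ℝ} (h0 : 0 ≤ rep x + c) (h1 : rep x + c < 1) :
    rep (x + (c : AddCircle (1:ℝ))) = rep x + c := by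
  conv_lhs => rw [← coe_rep x, ← AddCircle.coe_add]
  exact rep_coe h0 h1

lemma rep_injective : Function.Injective rep := fun x y h => by
  rw [← coe_rep x, ← coe_rep y, h]

lemma T2_ext {x y : T2} (h1 : rep x.1 = rep y.1) (h2 : rep x.2 = rep y.2) : x = y :=
  Prod.ext (rep_injective h1) (rep_injective h2)

lemma measurable_rep : Measurable rep :=
  measurable_subtype_coe.comp (AddCircle.measurableEquivIco 1 0).measurable

/-- Translating a point by `(c, d)` without leaving the unit square adds `(c, d)` to its
real coordinates. -/
lemma rep_add_tv {x : T2} {c d : ℝ} (hc0 : 0 ≤ rep x.1 + c) (hc1 : rep x.1 + c < 1)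
    (hd0 : 0 ≤ rep x.2 + d) (hd1 : rep x.2 + d < 1) :
    rep (x + tv c d).1 = rep x.1 + c ∧ rep (x + tv c d).2 = rep x.2 + d :=
  ⟨rep_add hc0 hc1, rep_add hd0 hd1⟩

/-! ### The block on which the construction changes, and its image -/

/-- The block `[1-4s,1) × [0,2s)`; for `s = 2⁻ⁿ` it is the set on which `U_n` is redefined. -/
def blockB (s : ℝ) : Set T2 := {x | 1 - 4*s ≤ rep x.1 ∧ rep x.2 < 2*s}

/-- The set `[0,2s) × [1-2s,1) ∪ [1-2s,1) × [0,2s)`; for `s = 2⁻ⁿ` it is the common image of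
`blockB s` under `U_{n-1}` and `U_n`. -/
def blockC (s : ℝ) : Set T2 :=
  {x | (rep x.1 < 2*s ∧ 1 - 2*s ≤ rep x.2) ∨ (1 - 2*s ≤ rep x.1 ∧ rep x.2 < 2*s)}

/-- The side length `s = 2⁻ⁿ`. -/
def side (n : ℕ) : ℝ := 1 / 2 ^ n

lemma side_pos (n : ℕ) : 0 < side n := by unfold side; positivity

lemma side_succ (n : ℕ) : side n = 2 * side (n+1) := by
  unfold side; rw [pow_succ]; field_simp

lemma side_add_two_le (n : ℕ) : side (n+2) ≤ 1/4 := by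
  induction n with
  | zero => norm_num [side]
  | succ k ih => linarith [side_succ (k+2), side_pos (k+1+2)]

lemma blockB_antitone {s t : ℝ} (h : s ≤ t) : blockB s ⊆ blockB t := fun x hx =>
  ⟨by linarith [hx.1], by linarith [hx.2]⟩

lemma chaconU_of_not_mem (n : ℕ) {x : T2} (hx : x ∉ blockB (side (n+2))) :
    chaconU (n+2) x = chaconU (n+1) x := by
  have hs := side_pos (n+2)
  rw [chaconU]
  change ¬ (_ ∧ _) at hx
  unfold side at hx hs
  dsimp only
  split_ifs <;> first | rfl | (exfalso; apply hx; constructor <;> linarith)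

/-- The action of `U_{n+2}` on its block, in real coordinates. -/
lemma chaconU_spec (n : ℕ) {x : T2} (hx : x ∈ blockB (side (n+2))) :
    let s := side (n+2)
    let a := rep x.1
    let b := rep x.2
    let p := rep (chaconU (n+2) x).1
    let q := rep (chaconU (n+2) x).2
    (1-4*s ≤ a ∧ a < 1-3*s ∧ s ≤ b ∧ b < 2*s ∧ p = a + (5*s-1) ∧ q = b + (1-2*s)) ∨
    (1-3*s ≤ a ∧ a < 1-2*s ∧ s ≤ b ∧ b < 2*s ∧ p = a + s ∧ q = b + 0) ∨
    (1-4*s ≤ a ∧ a < 1-3*s ∧ 0 ≤ b ∧ b < s ∧ p = a + 3*s ∧ q = b + s) ∨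
    (1-3*s ≤ a ∧ a < 1-2*s ∧ 0 ≤ b ∧ b < s ∧ p = a + s ∧ q = b + 0) ∨
    (1-2*s ≤ a ∧ a < 1 ∧ s ≤ b ∧ b < 2*s ∧ p = a + (2*s-1) ∧ q = b + (1-3*s)) ∨
    (1-2*s ≤ a ∧ a < 1-s ∧ 0 ≤ b ∧ b < s ∧ p = a + (2*s-1) ∧ q = b + (1-s)) ∨
    (1-s ≤ a ∧ a < 1 ∧ 0 ≤ b ∧ b < s ∧ p = a ∧ q = b) := by
  have hs := side_pos (n+2)
  have hs4 := side_add_two_le n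
  have ha0 := rep_nonneg x.1
  have ha1 := rep_lt_one x.1
  have hb0 := rep_nonneg x.2
  obtain ⟨h1, h2⟩ := hx
  intro s a b p q
  simp only [p, q]
  rw [chaconU]
  simp only [show (1 / 2 ^ (n+2) : ℝ) = s from rfl, show rep x.1 = a from rfl,
    show rep x.2 = b from rfl]
  change 0 < s at hs
  change s ≤ 1/4 at hs4
  change 1 - 4*s ≤ a at h1
  change b < 2*s at h2
  change 0 ≤ a at ha0
  change a < 1 at ha1
  change 0 ≤ b at hb0
  have key : ∀ c d : ℝ, 0 ≤ a + c → a + c < 1 → 0 ≤ b + d → b + d < 1 →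
      rep (x + tv c d).1 = a + c ∧ rep (x + tv c d).2 = b + d :=
    fun c d => rep_add_tv
  split_ifs with c1 c2 c3 c4 c5 c6 c7
  · have := key (5*s-1) (1-2*s) (by linarith) (by linarith) (by linarith) (by linarith)
    exact .inl ⟨c1.1, c1.2.1, c1.2.2.1, c1.2.2.2, this⟩
  · have := key s 0 (by linarith) (by linarith) (by linarith) (by linarith)
    exact .inr <| .inl ⟨c2.1, c2.2.1, c2.2.2.1, c2.2.2.2, this⟩
  · have := key (3*s) s (by linarith) (by linarith) (by linarith) (by linarith)
    exact .inr <| .inr <| .inl ⟨c3.1, c3.2.1, c3.2.2.1, c3.2.2.2, this⟩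
  · have := key s 0 (by linarith) (by linarith) (by linarith) (by linarith)
    exact .inr <| .inr <| .inr <| .inl ⟨c4.1, c4.2.1, c4.2.2.1, c4.2.2.2, this⟩
  · have := key (2*s-1) (1-3*s) (by linarith) (by linarith) (by linarith) (by linarith)
    exact .inr <| .inr <| .inr <| .inr <| .inl ⟨c5.1, c5.2.1, c5.2.2.1, c5.2.2.2, this⟩
  · have := key (2*s-1) (1-s) (by linarith) (by linarith) (by linarith) (by linarith)
    exact .inr <| .inr <| .inr <| .inr <| .inr <| .inl ⟨c6.1, c6.2.1, c6.2.2.1, c6.2.2.2, this⟩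
  · exact .inr <| .inr <| .inr <| .inr <| .inr <| .inr ⟨c7.1, c7.2.1, c7.2.2.1, c7.2.2.2, rfl, rfl⟩
  · exfalso
    clear key p q
    clear_value s a b
    grind

/-- The action of `U_{n+1}` on the block `[1-4s,1) × [0,2s)`, `s = 2⁻⁽ⁿ⁺²⁾`, of the following
map `U_{n+2}`: the left half is moved to the upper left corner of the square, the right half is fixed. -/
lemma chaconU_next_spec (n : ℕ) {x : T2} (hx : x ∈ blockB (side (n+2))) :
    let s := side (n+2)
    let a := rep x.1
    let b := rep x.2
    let p := rep (chaconU (n+1) x).1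
    let q := rep (chaconU (n+1) x).2
    (1-4*s ≤ a ∧ a < 1-2*s ∧ p = a + (4*s-1) ∧ q = b + (1-2*s)) ∨
    (1-2*s ≤ a ∧ p = a ∧ q = b) := by
  have ha0 := rep_nonneg x.1
  have ha1 := rep_lt_one x.1
  have hb0 := rep_nonneg x.2
  obtain ⟨h1, h2⟩ := hx
  cases n with
  | zero =>
    have hs : side (0+2) = 1/4 := by norm_num [side]
    intro s a b p q
    have hs' : s = 1/4 := hs
    rw [hs] at h1 h2
    simp only [p, q, hs', a, b]
    rw [chaconU]
    dsimp only
    split_ifs with c1 c2 c3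
    · linarith
    · linarith
    · left
      have := @rep_add_tv x 0 (1/2) (by linarith) (by linarith) (by linarith) (by linarith)
      exact ⟨by linarith, by linarith, by linarith, by linarith⟩
    · right
      refine ⟨?_, rfl, rfl⟩
      by_contra hc
      exact c3 ⟨ha0, by linarith, hb0, by linarith⟩
  | succ k =>
    have hs2 := side_succ (k+2)
    have hs := side_pos (k+1+2)
    have hx' : x ∈ blockB (side (k+2)) := ⟨by linarith, by linarith⟩
    have h := chaconU_spec k hx'
    intro s a b p q
    change side (k+2) = 2 * s at hs2
    change 0 < s at hs
    simp only [hs2] at h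
    change 1 - 4 * s ≤ a at h1
    change b < 2 * s at h2
    rcases h with h | h | h | h | h | h | h <;> obtain ⟨g1, g2, g3, g4, g5, g6⟩ := h
    · exfalso; linarith
    · exfalso; linarith
    · exfalso; linarith
    · exfalso; linarith
    · exfalso; linarith
    · left
      exact ⟨by linarith, by linarith, by linarith, by linarith⟩
    · right
      exact ⟨by linarith, g5, g6⟩

lemma chaconU_bijOn (n : ℕ) :
    BijOn (chaconU (n+2)) (blockB (side (n+2))) (blockC (side (n+2))) := by
  have hs := side_pos (n+2)
  have hs4 := side_add_two_le n
  refine ⟨fun x hx => ?_, fun x hx y hy hxy => ?_, fun y hy => ?_⟩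
  · change _ ∨ _
    rcases chaconU_spec n hx with h | h | h | h | h | h | h <;>
      obtain ⟨g1, g2, g3, g4, g5, g6⟩ := h <;>
      first
      | exact Or.inl ⟨by linarith, by linarith⟩
      | exact Or.inr ⟨by linarith, by linarith⟩
  · have hx' := chaconU_spec n hx
    have hy' := chaconU_spec n hy
    rw [← hxy] at hy'
    rcases hx' with h | h | h | h | h | h | h <;> obtain ⟨g1, g2, g3, g4, g5, g6⟩ := h <;>
      rcases hy' with h | h | h | h | h | h | h <;> obtain ⟨k1, k2, k3, k4, k5, k6⟩ := h <;>
      apply T2_ext <;> linarith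
  · have hp0 := rep_nonneg y.1
    have hp1 := rep_lt_one y.1
    have hq0 := rep_nonneg y.2
    have hq1 := rep_lt_one y.2
    -- It suffices to name, for each piece of `blockC`, the translation leading back to `blockB`.
    suffices h : ∃ x ∈ blockB (side (n+2)), rep (chaconU (n+2) x).1 = rep y.1 ∧
        rep (chaconU (n+2) x).2 = rep y.2 by
      obtain ⟨x, hx, h1, h2⟩ := h
      exact ⟨x, hx, T2_ext h1 h2⟩
    generalize hsd : side (n+2) = s at *
    have key : ∀ c d : ℝ, 1 - 4*s ≤ rep y.1 + c → rep y.1 + c < 1 → 0 ≤ rep y.2 + d →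
        rep y.2 + d < 2*s → ∃ x ∈ blockB s, rep x.1 = rep y.1 + c ∧ rep x.2 = rep y.2 + d := by
      intro c d h1 h2 h3 h4
      obtain ⟨e1, e2⟩ := @rep_add_tv y c d (by linarith) h2 h3 (by linarith)
      exact ⟨y + tv c d, ⟨by linarith, by linarith⟩, e1, e2⟩
    have fin : ∀ x ∈ blockB s, _ := fun x hx => chaconU_spec n (x := x) (hsd ▸ hx)
    simp only [hsd] at fin
    rcases hy with ⟨h1, h2⟩ | ⟨h1, h2⟩
    · rcases lt_or_ge (rep y.2) (1-s) with h3 | h3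
      · obtain ⟨x, hx, e1, e2⟩ := key (1-2*s) (3*s-1) (by linarith) (by linarith) (by linarith)
          (by linarith)
        refine ⟨x, hx, ?_⟩
        rcases fin x hx with h | h | h | h | h | h | h <;> constructor <;> linarith
      · rcases lt_or_ge (rep y.1) s with h4 | h4
        · obtain ⟨x, hx, e1, e2⟩ := key (1-2*s) (s-1) (by linarith) (by linarith) (by linarith)
            (by linarith)
          refine ⟨x, hx, ?_⟩
          rcases fin x hx with h | h | h | h | h | h | h <;> constructor <;> linarith
        · obtain ⟨x, hx, e1, e2⟩ := key (1-5*s) (2*s-1) (by linarith) (by linarith) (by linarith)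
            (by linarith)
          refine ⟨x, hx, ?_⟩
          rcases fin x hx with h | h | h | h | h | h | h <;> constructor <;> linarith
    · rcases lt_or_ge (rep y.1) (1-s) with h3 | h3
      · obtain ⟨x, hx, e1, e2⟩ := key (-s) 0 (by linarith) (by linarith) (by linarith)
          (by linarith)
        refine ⟨x, hx, ?_⟩
        rcases fin x hx with h | h | h | h | h | h | h <;> constructor <;> linarith
      · rcases lt_or_ge (rep y.2) s with h4 | h4
        · obtain ⟨x, hx, e1, e2⟩ := key 0 0 (by linarith) (by linarith) (by linarith)
            (by linarith)
          refine ⟨x, hx, ?_⟩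
          rcases fin x hx with h | h | h | h | h | h | h <;> constructor <;> linarith
        · obtain ⟨x, hx, e1, e2⟩ := key (-(3*s)) (-s) (by linarith) (by linarith) (by linarith)
            (by linarith)
          refine ⟨x, hx, ?_⟩
          rcases fin x hx with h | h | h | h | h | h | h <;> constructor <;> linarith

lemma chaconU_bijOn_next (n : ℕ) :
    BijOn (chaconU (n+1)) (blockB (side (n+2))) (blockC (side (n+2))) := by
  have hs := side_pos (n+2)
  have hs4 := side_add_two_le n
  refine ⟨fun x hx => ?_, fun x hx y hy hxy => ?_, fun y hy => ?_⟩
  · have hb0 := rep_nonneg x.2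
    have hx2 := hx.2
    change _ ∨ _
    rcases chaconU_next_spec n hx with ⟨g1, g2, g3, g4⟩ | ⟨g1, g2, g3⟩
    · exact Or.inl ⟨by linarith, by linarith⟩
    · exact Or.inr ⟨by linarith, by linarith⟩
  · have hx' := chaconU_next_spec n hx
    have hy' := chaconU_next_spec n hy
    rw [← hxy] at hy'
    have := rep_lt_one x.1
    have := rep_lt_one y.1
    rcases hx' with ⟨g1, g2, g3, g4⟩ | ⟨g1, g2, g3⟩ <;>
      rcases hy' with ⟨k1, k2, k3, k4⟩ | ⟨k1, k2, k3⟩ <;>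
      apply T2_ext <;> linarith [hx.2, hy.2, rep_nonneg x.2, rep_nonneg y.2]
  · have hp0 := rep_nonneg y.1
    have hq1 := rep_lt_one y.2
    rcases hy with ⟨h1, h2⟩ | ⟨h1, h2⟩
    · obtain ⟨e1, e2⟩ := @rep_add_tv y (1 - 4 * side (n+2)) (2 * side (n+2) - 1)
        (by linarith) (by linarith) (by linarith) (by linarith)
      have hx : y + tv (1 - 4 * side (n+2)) (2 * side (n+2) - 1) ∈ blockB (side (n+2)) :=
        ⟨by linarith, by linarith⟩
      refine ⟨_, hx, ?_⟩
      rcases chaconU_next_spec n hx with ⟨g1, g2, g3, g4⟩ | ⟨g1, g2, g3⟩ <;>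
        apply T2_ext <;> linarith
    · have hx : y ∈ blockB (side (n+2)) := ⟨by linarith, h2⟩
      refine ⟨_, hx, ?_⟩
      rcases chaconU_next_spec n hx with ⟨g1, g2, g3, g4⟩ | ⟨g1, g2, g3⟩ <;>
        apply T2_ext <;> linarith

/-! ### Bijectivity -/

/-- `U_1` in real coordinates: a permutation of the four quarter squares. -/
lemma chaconU_one_spec (x : T2) :
    let a := rep x.1
    let b := rep x.2
    let p := rep (chaconU 1 x).1
    let q := rep (chaconU 1 x).2
    (a < 1/2 ∧ 1/2 ≤ b ∧ p = a + 1/2 ∧ q = b + 0) ∨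
    (1/2 ≤ a ∧ 1/2 ≤ b ∧ p = a + -(1/2) ∧ q = b + -(1/2)) ∨
    (a < 1/2 ∧ b < 1/2 ∧ p = a + 0 ∧ q = b + 1/2) ∨
    (1/2 ≤ a ∧ b < 1/2 ∧ p = a ∧ q = b) := by
  have ha0 := rep_nonneg x.1
  have ha1 := rep_lt_one x.1
  have hb0 := rep_nonneg x.2
  have hb1 := rep_lt_one x.2
  intro a b p q
  simp only [p, q, a, b]
  rw [chaconU]
  dsimp only
  split_ifs with c1 c2 c3
  · have := @rep_add_tv x (1/2) 0 (by linarith) (by linarith) (by linarith) (by linarith)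
    tauto
  · have := @rep_add_tv x (-(1/2)) (-(1/2)) (by linarith) (by linarith) (by linarith)
      (by linarith)
    tauto
  · have := @rep_add_tv x 0 (1/2) (by linarith) (by linarith) (by linarith) (by linarith)
    tauto
  · grind

lemma chaconU_one_bijective : Function.Bijective (chaconU 1) := by
  refine ⟨fun x y hxy => ?_, fun y => ?_⟩
  · have hx := chaconU_one_spec x
    have hy := chaconU_one_spec y
    rw [← hxy] at hy
    have := rep_nonneg x.1
    have := rep_lt_one x.1
    have := rep_nonneg x.2
    have := rep_lt_one x.2
    have := rep_nonneg y.1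
    have := rep_lt_one y.1
    have := rep_nonneg y.2
    have := rep_lt_one y.2
    rcases hx with h | h | h | h <;> obtain ⟨g1, g2, g3, g4⟩ := h <;>
      rcases hy with h | h | h | h <;> obtain ⟨k1, k2, k3, k4⟩ := h <;>
      apply T2_ext <;> linarith
  · have hp0 := rep_nonneg y.1
    have hp1 := rep_lt_one y.1
    have hq0 := rep_nonneg y.2
    have hq1 := rep_lt_one y.2
    have key : ∀ c d : ℝ, 0 ≤ rep y.1 + c → rep y.1 + c < 1 → 0 ≤ rep y.2 + d →
        rep y.2 + d < 1 → ∃ x : T2, rep x.1 = rep y.1 + c ∧ rep x.2 = rep y.2 + d :=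
      fun c d h1 h2 h3 h4 => ⟨y + tv c d, rep_add_tv h1 h2 h3 h4⟩
    rcases lt_or_ge (rep y.1) (1/2) with h1 | h1 <;> rcases lt_or_ge (rep y.2) (1/2) with h2 | h2
    · obtain ⟨x, e1, e2⟩ := key (1/2) (1/2) (by linarith) (by linarith) (by linarith)
        (by linarith)
      refine ⟨x, ?_⟩
      rcases chaconU_one_spec x with h | h | h | h <;> apply T2_ext <;> linarith
    · obtain ⟨x, e1, e2⟩ := key 0 (-(1/2)) (by linarith) (by linarith) (by linarith)
        (by linarith)
      refine ⟨x, ?_⟩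
      rcases chaconU_one_spec x with h | h | h | h <;> apply T2_ext <;> linarith
    · refine ⟨y, ?_⟩
      rcases chaconU_one_spec y with h | h | h | h <;> apply T2_ext <;> linarith
    · obtain ⟨x, e1, e2⟩ := key (-(1/2)) 0 (by linarith) (by linarith) (by linarith)
        (by linarith)
      refine ⟨x, ?_⟩
      rcases chaconU_one_spec x with h | h | h | h <;> apply T2_ext <;> linarith

/-- Outside its block `U_{n+2}` agrees with the bijection `U_{n+1}`, and both map the block
bijectively onto the same set. -/
lemma chaconU_bijective (n : ℕ) : Function.Bijective (chaconU (n+1)) := by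
  induction n with
  | zero => exact chaconU_one_bijective
  | succ n ih =>
    have h1 := chaconU_bijOn n
    have h2 : BijOn (chaconU (n+2)) (blockB (side (n+2)))ᶜ (blockC (side (n+2)))ᶜ :=
      ((chaconU_bijOn_next n).compl ih).congr fun x hx => (chaconU_of_not_mem n hx).symm
    have hinj : InjOn (chaconU (n+2)) (blockB (side (n+2)) ∪ (blockB (side (n+2)))ᶜ) := by
      refine (injOn_union disjoint_compl_right).2 ⟨h1.injOn, h2.injOn, fun x hx y hy he => ?_⟩
      exact h2.mapsTo hy (he ▸ h1.mapsTo hx)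
    have h3 := h1.union h2 hinj
    rw [union_compl_self, union_compl_self] at h3
    exact bijOn_univ.1 h3

/-! ### The limit map -/

lemma exists_side_lt {ε : ℝ} (hε : 0 < ε) : ∃ n : ℕ, side (n+2) < ε := by
  obtain ⟨n, hn⟩ := exists_pow_lt_of_lt_one hε (show (1/2:ℝ) < 1 by norm_num)
  refine ⟨n, ?_⟩
  have h1 : side n < ε := by simpa [side] using hn
  linarith [side_succ n, side_succ (n+1), side_pos (n+2)]

lemma side_antitone : Antitone side :=
  antitone_nat_of_succ_le fun n => by linarith [side_succ n, side_pos (n+1)]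

lemma chaconU_stable {N : ℕ} {x : T2} (hx : x ∉ blockB (side (N+2))) {n : ℕ} (hn : N ≤ n) :
    chaconU (n+1) x = chaconU (N+1) x := by
  induction n, hn using Nat.le_induction with
  | base => rfl
  | succ n hn ih =>
    rw [← ih]
    exact chaconU_of_not_mem n fun h => hx (blockB_antitone (side_antitone (by omega)) h)

/-- The blocks shrink to the empty set, since points of the square have first coordinate `< 1`. -/
lemma exists_not_mem_blockB (x : T2) : ∃ N, x ∉ blockB (side (N+2)) := by
  obtain ⟨N, hN⟩ := exists_side_lt (ε := (1 - rep x.1)/4) (by linarith [rep_lt_one x.1])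
  exact ⟨N, fun h => by linarith [h.1]⟩

lemma exists_not_mem_blockC (x : T2) : ∃ N, x ∉ blockC (side (N+2)) := by
  have h1 := rep_lt_one x.1
  have h2 := rep_lt_one x.2
  obtain ⟨N, hN⟩ := exists_side_lt (ε := min ((1 - rep x.1)/2) ((1 - rep x.2)/2))
    (lt_min (by linarith) (by linarith))
  have h3 := lt_of_lt_of_le hN (min_le_left _ _)
  have h4 := lt_of_lt_of_le hN (min_le_right _ _)
  refine ⟨N, fun h => ?_⟩
  rcases h with h | h <;> linarith [h.1, h.2]

open Classical in
/-- The pointwise limit of the maps `U_n`: the value from the first index after which `x` lies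
in no block. -/
def chaconLim (x : T2) : T2 := chaconU (Nat.find (exists_not_mem_blockB x) + 1) x

lemma chaconLim_eq {N : ℕ} {x : T2} (hx : x ∉ blockB (side (N+2))) :
    chaconLim x = chaconU (N+1) x := by
  classical
  exact (chaconU_stable (Nat.find_spec (exists_not_mem_blockB x))
    (Nat.find_min' (exists_not_mem_blockB x) hx)).symm

lemma chaconU_eventually (x : T2) : ∃ N : ℕ, 1 ≤ N ∧ ∀ n, N ≤ n → chaconU n x = chaconLim x := by
  obtain ⟨N, hN⟩ := exists_not_mem_blockB x
  refine ⟨N+1, by omega, fun n hn => ?_⟩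
  obtain ⟨m, rfl⟩ : ∃ m, n = m + 1 := ⟨n - 1, by omega⟩
  rw [chaconLim_eq hN, chaconU_stable hN (by omega)]

lemma chaconLim_bijective : Function.Bijective chaconLim := by
  refine ⟨fun x y hxy => ?_, fun y => ?_⟩
  · obtain ⟨N, -, hN⟩ := chaconU_eventually x
    obtain ⟨M, -, hM⟩ := chaconU_eventually y
    apply (chaconU_bijective (N + M)).1
    rw [hN _ (by omega), hM _ (by omega), hxy]
  · obtain ⟨N, hN⟩ := exists_not_mem_blockC y
    obtain ⟨x, rfl⟩ := (chaconU_bijective N).2 y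
    exact ⟨x, chaconLim_eq fun h => hN ((chaconU_bijOn_next N).mapsTo h)⟩

/-! ### Measurability and invariance of the measure -/

lemma measurable_chaconU (n : ℕ) : Measurable (chaconU n) := by
  have h1 : Measurable fun x : T2 => rep x.1 := measurable_rep.comp measurable_fst
  have h2 : Measurable fun x : T2 => rep x.2 := measurable_rep.comp measurable_snd
  have hset : ∀ a b c d : ℝ,
      MeasurableSet {x : T2 | a ≤ rep x.1 ∧ rep x.1 < b ∧ c ≤ rep x.2 ∧ rep x.2 < d} :=
    fun a b c d => (measurableSet_le measurable_const h1).inter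
      ((measurableSet_lt h1 measurable_const).inter
        ((measurableSet_le measurable_const h2).inter (measurableSet_lt h2 measurable_const)))
  have hadd : ∀ v : T2, Measurable fun x : T2 => x + v := fun v => measurable_add_const v
  induction n with
  | zero => exact measurable_id
  | succ n ih =>
    cases n with
    | zero =>
      unfold chaconU
      repeat' refine Measurable.ite (hset _ _ _ _) ?_ ?_
      all_goals first | exact hadd _ | exact measurable_id
    | succ n =>
      unfold chaconU
      repeat' refine Measurable.ite (hset _ _ _ _) ?_ ?_
      all_goals first | exact hadd _ | exact measurable_id | exact ih

lemma measurable_chaconLim : Measurable chaconLim := by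
  refine measurable_of_tendsto_metrizable measurable_chaconU (tendsto_pi_nhds.2 fun x => ?_)
  obtain ⟨N, -, hN⟩ := chaconU_eventually x
  exact tendsto_atTop_of_eventually_const hN

/-- All displacements `U_n(x) - x` are rational. -/
lemma chaconU_displacement (n : ℕ) (x : T2) :
    chaconU n x ∈ range fun v : ℚ × ℚ => x + tv v.1 v.2 := by
  have hz : x ∈ range fun v : ℚ × ℚ => x + tv v.1 v.2 :=
    ⟨(0, 0), by ext <;> simp [tv]⟩
  have hq : ∀ (c d : ℝ) (q r : ℚ), (q : ℝ) = c → (r : ℝ) = d →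
      x + tv c d ∈ range fun v : ℚ × ℚ => x + tv v.1 v.2 := by
    rintro c d q r rfl rfl
    exact ⟨(q, r), rfl⟩
  induction n with
  | zero => exact hz
  | succ n ih =>
    cases n with
    | zero =>
      unfold chaconU
      split_ifs
      · exact hq _ _ (1/2) 0 (by norm_num) (by norm_num)
      · exact hq _ _ (-(1/2)) (-(1/2)) (by norm_num) (by norm_num)
      · exact hq _ _ 0 (1/2) (by norm_num) (by norm_num)
      · exact hz
    | succ n =>
      unfold chaconU
      obtain ⟨t, ht⟩ : ∃ t : ℚ, (t : ℝ) = 1 / 2 ^ (n+2) := ⟨1 / 2 ^ (n+2), by norm_num⟩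
      simp only [← ht]
      split_ifs
      · exact hq _ _ (5*t-1) (1-2*t) (by norm_num) (by norm_num)
      · exact hq _ _ t 0 (by norm_num) (by norm_num)
      · exact hq _ _ (3*t) t (by norm_num) (by norm_num)
      · exact hq _ _ t 0 (by norm_num) (by norm_num)
      · exact hq _ _ (2*t-1) (1-3*t) (by norm_num) (by norm_num)
      · exact hq _ _ (2*t-1) (1-t) (by norm_num) (by norm_num)
      · exact hz
      · exact ih

/-- A measurable bijection with countably many displacements preserves every translation
invariant measure: the sets of constant displacement partition the space, and so do their
translates. -/
lemma measure_preimage_of_countable_displacement {ι G : Type*} [Countable ι] [AddCommGroup G]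
    [MeasurableSpace G] [MeasurableAdd G] [MeasurableSingletonClass G] [MeasurableSub₂ G]
    (μ : Measure G) [μ.IsAddRightInvariant] {U : G → G} (hU : Measurable U)
    (hbij : Function.Bijective U) (d : ι → G) (hd : ∀ x, U x ∈ range fun i => x + d i)
    {A : Set G} (hA : MeasurableSet A) : μ (U ⁻¹' A) = μ A := by
  -- Indexing by the distinct displacements makes the pieces disjoint.
  have hcount : Countable (range d) := (countable_range d).to_subtype
  let E : range d → Set G := fun v => {x | U x - x = v}
  have hE : ∀ v, MeasurableSet (E v) := fun v =>
    (hU.sub measurable_id) (measurableSet_singleton (v : G))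
  have hmem : ∀ x, ∃ v, x ∈ E v := fun x => by
    obtain ⟨i, hi⟩ := hd x
    refine ⟨⟨d i, i, rfl⟩, ?_⟩
    change U x - x = d i
    rw [← hi]; simp
  let F : range d → Set G := fun v => (fun y => y + -(v : G)) ⁻¹' (E v)
  have hF : ∀ v, MeasurableSet (F v) := fun v => measurable_add_const _ (hE v)
  -- `y ∈ F v` says that `y` is the image under `U` of a point of `E v`.
  have hFU : ∀ y v, y ∈ F v → U (y + -(v : G)) = y := fun y v hy => by
    have h : U (y + -(v : G)) - (y + -(v : G)) = v := hy
    rw [sub_eq_iff_eq_add] at h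
    rw [h]; abel
  have e1 : U ⁻¹' A = ⋃ v, E v ∩ U ⁻¹' A := by
    rw [← iUnion_inter, eq_comm, inter_eq_right]
    exact fun x _ => mem_iUnion.2 (hmem x)
  have e2 : A = ⋃ v, F v ∩ A := by
    rw [← iUnion_inter, eq_comm, inter_eq_right]
    intro y _
    obtain ⟨x, rfl⟩ := hbij.2 y
    obtain ⟨v, hv⟩ := hmem x
    refine mem_iUnion.2 ⟨v, ?_⟩
    have h : U x - x = v := hv
    change U x + -(v : G) ∈ E v
    rw [← h]
    simpa using hv
  have d1 : Pairwise (Function.onFun Disjoint fun v => E v ∩ U ⁻¹' A) := fun v w hvw =>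
    Set.disjoint_left.2 fun x hx hy => hvw (Subtype.ext ((show U x - x = v from hx.1).symm.trans
      hy.1))
  have d2 : Pairwise (Function.onFun Disjoint fun v => F v ∩ A) := fun v w hvw =>
    Set.disjoint_left.2 fun y hx hy => by
      have h := hbij.1 ((hFU y v hx.1).trans (hFU y w hy.1).symm)
      exact hvw (Subtype.ext (neg_injective (add_left_cancel h)))
  rw [e1, measure_iUnion d1 fun v => (hE v).inter (hU hA)]
  conv_rhs => rw [e2, measure_iUnion d2 fun v => (hF v).inter hA]
  refine tsum_congr fun v => ?_
  rw [← measure_preimage_add_right μ (-(v : G)) (E v ∩ U ⁻¹' A)]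
  congr 1
  ext y
  constructor
  · rintro ⟨h, h'⟩
    refine ⟨h, ?_⟩
    have h'' : U (y + -(v : G)) ∈ A := h'
    rwa [hFU y v h] at h''
  · rintro ⟨h, h'⟩
    refine ⟨h, ?_⟩
    change U (y + -(v : G)) ∈ A
    rwa [hFU y v h]

/-- For a.e. `x` the sequence `(U_n(x))_{n ≥ 1}` is eventually constant, and its a.e.
pointwise limit `U` is an automorphism of the torus. -/
theorem chacon_limit_is_automorphism :
    ∃ U : T2 → T2,
      (∀ᵐ x ∂(volume : Measure T2), ∃ N : ℕ, 1 ≤ N ∧ ∀ n, N ≤ n → chaconU n x = U x) ∧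
      IsAutomorphism U := by
  refine ⟨chaconLim, Eventually.of_forall chaconU_eventually, measurable_chaconLim, ?_⟩
  have hemb : MeasurableEmbedding chaconLim :=
    measurable_chaconLim.measurableEmbedding chaconLim_bijective.1
  refine ⟨(Equiv.ofBijective chaconLim chaconLim_bijective).symm, ?_, ?_, ?_, ?_⟩
  · intro A hA
    rw [← Equiv.image_eq_preimage_symm]
    exact hemb.measurableSet_image.2 hA
  · exact Eventually.of_forall (Equiv.ofBijective chaconLim chaconLim_bijective).symm_apply_apply
  · exact Eventually.of_forall (Equiv.ofBijective chaconLim chaconLim_bijective).apply_symm_apply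
  · intro A hA
    have hinv : (volume : Measure T2).IsAddLeftInvariant :=
      inferInstanceAs (Measure.prod (volume : Measure (AddCircle (1:ℝ)))
        (volume : Measure (AddCircle (1:ℝ)))).IsAddLeftInvariant
    refine measure_preimage_of_countable_displacement volume measurable_chaconLim
      chaconLim_bijective (fun v : ℚ × ℚ => tv v.1 v.2) (fun x => ?_) hA
    obtain ⟨N, -, hN⟩ := chaconU_eventually x
    rw [← hN N le_rfl]
    exact chaconU_displacement N x

end
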